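/- Let a ∈ ℝ with a² > 2 and let 𝒫ₙ, n ∈ ℕ∖{1}, and 𝒲_a be as follows: with ξ = 1−a², Pₙ(t) = Hₙ(t)·diag(1,ξ) + n·H_{n−1}(t)·[[0,−a],[−a,a²t]], P₁(t) = [[2t,−a],[−a,(2−a²)t]], 𝒫ₙ = −Pₙ + Pₙ'·(P₁')⁻¹·P₁, 𝔭(t) = (4−2a²)t² − a², and 𝒲_a(t) = (e^{−t²}/𝔭(t)²)·[[ (a²/(4(a²−2)))𝔭(t)² + 𝔭(t)/(a²−2) − a², a(𝔭(t)/(a²−2) − 2)t ],[ a(𝔭(t)/(a²−2) − 2)t, 2(a²(a²−2) − 𝔭(t))/(a²−2)² ]]. If f : ℝ → Matrix 2 2 ℝ is measurable with ∫_ℝ trace(f(t)·𝒲_a(t)·f(t)ᵀ) dt < ∞ and ∫_ℝ f(t)·𝒲_a(t)·𝒫ₙ(t)ᵀ dt = 0 for every n ∈ ℕ∖{1}, then f(t) = 0 for Lebesgue-almost every t ∈ ℝ. (Equivalently, the left linear combinations of the 𝒫ₙ, n ≠ 1, are dense in L²(𝒲_a).) -/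

import Mathlib

/-!
Each row of `f` can be treated separately: let `w = (g, h)` be a row of `f 𝒲_a`.

* `𝒲_a` is positive definite with diagonal `O(e^{-t²})`, so Cauchy–Schwarz shows that
  `w e^{c|t|}` is integrable for every `c`. A function with this decay whose moments all vanish is
  zero almost everywhere (`ae_eq_zero_of_moments`): expanding `e^{ixt}` in powers of `x` shows that
  its Fourier transform vanishes, and characteristic functions separate finite measures.
* The leading coefficients of the matrix polynomials `Pₙ` are invertible for all `n` when `a² > 2`,
  so their rows span all rows of real polynomials (`rowP_span`). The operator
  `𝒜 y = -y + y' (P₁')⁻¹ P₁` kills `P₁`, so the missing index `n = 1` costs nothing: `w` is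
  orthogonal to `𝒜 y` for every polynomial row `y`.
* For `y = u P₁` one finds `𝒜 y = u' P₁ (P₁')⁻¹ P₁`. Taking for `u` the monomial rows, every moment
  of `w (P₁ (P₁')⁻¹ P₁)ᵀ` vanishes, so this function is zero almost everywhere
  (`row_zero`). The determinant of `P₁ (P₁')⁻¹ P₁` is a nonzero multiple of `𝔭²`, which has no real
  zeros, so `w = 0`; finally `f = 0` since `𝒲_a` is invertible.
-/

open MeasureTheory Matrix

noncomputable section

abbrev M2 := Matrix (Fin 2) (Fin 2) ℝ

/-- the `n`-th physicists' Hermite polynomial `Hₙ(t) = (−1)ⁿ e^{t²} (d/dt)ⁿ e^{−t²}`. -/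
def H (n : ℕ) (t : ℝ) : ℝ :=
  (-1 : ℝ) ^ n * Real.exp (t ^ 2) * iteratedDeriv n (fun s => Real.exp (-(s ^ 2))) t

/-- the matrix polynomials `P_{n,a,ξ}`. -/
def Pher (a ξ : ℝ) (n : ℕ) (t : ℝ) : M2 :=
  H n t • Matrix.diagonal ![1, ξ] + ((n : ℝ) * H (n - 1) t) • !![0, -a; -a, a ^ 2 * t]

def matDeriv (f : ℝ → M2) : ℝ → M2 :=
  fun t => Matrix.of fun i j => deriv (fun s => f s i j) t

/-- `𝒜(y) = −y + y'·(P₁')⁻¹·P₁`, with `ξ = 1 − a²`. -/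
def Acal (a : ℝ) (y : ℝ → M2) : ℝ → M2 :=
  fun t => -(y t)
    + matDeriv y t * ((matDeriv (Pher a (1 - a ^ 2) 1) t)⁻¹ * Pher a (1 - a ^ 2) 1 t)

/-- the exceptional polynomials `𝒫ₙ = 𝒜(P_{n,a,1−a²}) = −Pₙ + Pₙ'·(P₁')⁻¹·P₁`. -/
def Pexc (a : ℝ) (n : ℕ) : ℝ → M2 := Acal a (Pher a (1 - a ^ 2) n)

/-- `𝔭(t) = (4 − 2a²)t² − a²`. -/
def pfrak (a t : ℝ) : ℝ := (4 - 2 * a ^ 2) * t ^ 2 - a ^ 2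

/-- the exceptional weight `𝒲_a`. -/
def Wexc (a : ℝ) (t : ℝ) : M2 :=
  (Real.exp (-t ^ 2) / (pfrak a t) ^ 2) •
    !![a ^ 2 / (4 * (a ^ 2 - 2)) * (pfrak a t) ^ 2 + pfrak a t / (a ^ 2 - 2) - a ^ 2,
        a * (pfrak a t / (a ^ 2 - 2) - 2) * t;
      a * (pfrak a t / (a ^ 2 - 2) - 2) * t,
        2 * (a ^ 2 * (a ^ 2 - 2) - pfrak a t) / (a ^ 2 - 2) ^ 2]

/-! ### Hermite polynomials and the operator `𝒜` on polynomial rows -/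

open Polynomial in
/-- The physicists' Hermite polynomials as elements of `ℝ[X]`. -/
def hermP : ℕ → ℝ[X]
  | 0 => 1
  | n + 1 => C 2 * X * hermP n - derivative (hermP n)

lemma iteratedDeriv_gauss (n : ℕ) : iteratedDeriv n (fun s : ℝ => Real.exp (-(s ^ 2)))
    = fun t => (-1) ^ n * (hermP n).eval t * Real.exp (-(t ^ 2)) := by
  induction n with
  | zero => simp [hermP]
  | succ n ih =>
    rw [iteratedDeriv_succ, ih]
    ext t
    have h1 : HasDerivAt (fun t : ℝ => Real.exp (-(t ^ 2))) (Real.exp (-(t ^ 2)) * (-(2 * t))) t := by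
      simpa using ((hasDerivAt_pow 2 t).fun_neg).exp
    have h2 := (((hermP n).hasDerivAt t).const_mul ((-1 : ℝ) ^ n)).mul h1
    refine h2.deriv.trans ?_
    simp [hermP]
    ring

lemma H_eq (n : ℕ) (t : ℝ) : H n t = (hermP n).eval t := by
  have h : Real.exp (t ^ 2) * Real.exp (-(t ^ 2)) = 1 := by rw [← Real.exp_add]; simp
  have h' : ((-1 : ℝ) ^ n) * (-1) ^ n = 1 := by rw [← mul_pow]; simp
  rw [H, iteratedDeriv_gauss]
  linear_combination (hermP n).eval t * (h + (Real.exp (t ^ 2) * Real.exp (-(t ^ 2))) * h')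

section
open Polynomial

lemma hermP_coeff_of_lt (n : ℕ) : ∀ m, n < m → (hermP n).coeff m = 0 := by
  induction n with
  | zero => intro m hm; rw [hermP, coeff_one]; simp; omega
  | succ n ih =>
    intro m hm
    obtain ⟨m, rfl⟩ : ∃ k, m = k + 1 := ⟨m - 1, by omega⟩
    rw [hermP, coeff_sub, mul_assoc, coeff_C_mul, coeff_X_mul, coeff_derivative,
      ih m (by omega), ih (m + 2) (by omega)]
    simp

lemma hermP_coeff_self (n : ℕ) : (hermP n).coeff n = 2 ^ n := by
  induction n with
  | zero => simp [hermP]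
  | succ n ih =>
    rw [hermP, coeff_sub, mul_assoc, coeff_C_mul, coeff_X_mul, coeff_derivative,
      ih, hermP_coeff_of_lt n (n + 2) (by omega)]
    ring

/-- The rows of `Pher a (1 - a ^ 2) n`, as pairs of polynomials. -/
def rowP (a : ℝ) (n : ℕ) : Fin 2 → ℝ[X] × ℝ[X] :=
  ![(hermP n, C (-(a * n)) * hermP (n - 1)),
    (C (-(a * n)) * hermP (n - 1), C (1 - a ^ 2) * hermP n + C (a ^ 2 * n) * (X * hermP (n - 1)))]

/-- The leading coefficient of `Pₙ` is `2ⁿ diag(1, 1 + (n - 2) a² / 2)`, hence invertible for every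
`n` when `a² > 2`, so the rows of the `Pₙ` span everything. -/
lemma rowP_span {a : ℝ} (ha : a ^ 2 > 2) (S : Submodule ℝ (ℝ[X] × ℝ[X]))
    (hS : ∀ n i, rowP a n i ∈ S) : S = ⊤ := by
  -- polynomials of degree less than `n`, in either slot, by induction on `n`
  have key : ∀ n : ℕ, ∀ p : ℝ[X], (∀ m, n ≤ m → p.coeff m = 0) →
      ((p, 0) : ℝ[X] × ℝ[X]) ∈ S ∧ ((0, p) : ℝ[X] × ℝ[X]) ∈ S := by
    intro n
    induction n with
    | zero =>
      intro p hp
      obtain rfl : p = 0 := by ext m; simpa using hp m (Nat.zero_le m)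
      exact ⟨S.zero_mem, S.zero_mem⟩
    | succ n ih =>
      have hlow := ih (C (a * n) * hermP (n - 1)) (by
        intro m hm
        rw [coeff_C_mul]
        rcases n with _ | n
        · simp
        · rw [hermP_coeff_of_lt _ m (by simpa using hm), mul_zero])
      have hA : ((hermP n, 0) : ℝ[X] × ℝ[X]) ∈ S := by
        convert S.add_mem (hS n 0) hlow.2 using 1
        ext1 <;> simp [rowP]
      set q : ℝ[X] := C (1 - a ^ 2) * hermP n + C (a ^ 2 * n) * (X * hermP (n - 1)) with hq
      have hB : ((0, q) : ℝ[X] × ℝ[X]) ∈ S := by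
        convert S.add_mem (hS n 1) hlow.1 using 1
        ext1 <;> simp [rowP, hq]
      have hqlt : ∀ m, n < m → q.coeff m = 0 := by
        intro m hm
        obtain ⟨m, rfl⟩ : ∃ k, m = k + 1 := ⟨m - 1, by omega⟩
        simp only [hq, coeff_add, coeff_C_mul, coeff_X_mul]
        rw [hermP_coeff_of_lt n (m + 1) (by omega)]
        rcases n with _ | n
        · simp
        · rw [hermP_coeff_of_lt _ m (by simp; omega)]; simp
      have hqn : q.coeff n ≠ 0 := by
        rcases n with _ | n
        · rw [coeff_zero_eq_eval_zero]
          simp only [hq, hermP, eval_add, eval_mul, eval_C, eval_one, eval_X]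
          simp only [Nat.cast_zero]
          nlinarith
        · simp only [hq, coeff_add, coeff_C_mul, coeff_X_mul, Nat.add_sub_cancel, hermP_coeff_self]
          have : (1 - a ^ 2) * (2 : ℝ) ^ (n + 1) + a ^ 2 * ((n + 1 : ℕ) : ℝ) * 2 ^ n
            = 2 ^ n * (2 + a ^ 2 * (n - 1)) := by push_cast; ring
          rw [this]
          refine mul_ne_zero (by positivity) ?_
          rcases n with _ | n
          · simp; linarith
          · push_cast; have : 0 ≤ a ^ 2 * (n : ℝ) := by positivity
            nlinarith
      -- subtracting a multiple of a polynomial of exact degree `n` lowers the degree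
      have red : ∀ (r p : ℝ[X]), (∀ m, n < m → r.coeff m = 0) → r.coeff n ≠ 0 →
          (∀ m, n + 1 ≤ m → p.coeff m = 0) →
          ∀ m, n ≤ m → (p - (p.coeff n / r.coeff n) • r).coeff m = 0 := by
        intro r p hr hrn hp m hm
        rcases hm.eq_or_lt with rfl | hm
        · simp [hrn]
        · simp [hr m hm, hp m hm]
      intro p hp
      constructor
      · convert S.add_mem (ih _ (red (hermP n) p (hermP_coeff_of_lt n)
          (by rw [hermP_coeff_self]; positivity) hp)).1
          (S.smul_mem (p.coeff n / (hermP n).coeff n) hA) using 1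
        ext1 <;> simp
      · convert S.add_mem (ih _ (red q p hqlt hqn hp)).2
          (S.smul_mem (p.coeff n / q.coeff n) hB) using 1
        ext1 <;> simp
  rw [eq_top_iff]
  rintro ⟨p, q⟩ -
  have hv : ∀ p : ℝ[X], ∀ m, p.natDegree + 1 ≤ m → p.coeff m = 0 :=
    fun p m hm => coeff_eq_zero_of_natDegree_lt hm
  simpa using S.add_mem (key _ p (hv p)).1 (key _ q (hv q)).2

/-- The operator `y ↦ -y + y' (P₁')⁻¹ P₁` on rows of polynomials. -/
def rowA (a : ℝ) : (ℝ[X] × ℝ[X]) →ₗ[ℝ] (ℝ[X] × ℝ[X]) where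
  toFun y := (X * derivative y.1 - C (a / (2 - a ^ 2)) * derivative y.2 - y.1,
    X * derivative y.2 - C (a / 2) * derivative y.1 - y.2)
  map_add' y z := by ext1 <;> simp <;> ring
  map_smul' c y := by
    ext1 <;> simp only [Prod.smul_fst, Prod.smul_snd, smul_eq_C_mul, derivative_C_mul, RingHom.id_apply] <;> ring

lemma Pher_eq (a : ℝ) (n : ℕ) (t : ℝ) : Pher a (1 - a ^ 2) n t =
    !![(rowP a n 0).1.eval t, (rowP a n 0).2.eval t;
      (rowP a n 1).1.eval t, (rowP a n 1).2.eval t] := by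
  ext i j
  fin_cases i <;> fin_cases j <;> simp [Pher, rowP, H_eq] <;> ring

lemma matDeriv_Pher (a : ℝ) (n : ℕ) (t : ℝ) : matDeriv (Pher a (1 - a ^ 2) n) t =
    !![(derivative (rowP a n 0).1).eval t, (derivative (rowP a n 0).2).eval t;
      (derivative (rowP a n 1).1).eval t, (derivative (rowP a n 1).2).eval t] := by
  ext i j
  fin_cases i <;> fin_cases j <;> simp only [matDeriv, Pher_eq] <;> simp

lemma Pexc_eq {a : ℝ} (ha : a ^ 2 > 2) (n : ℕ) (t : ℝ) (i : Fin 2) :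
    Pexc a n t i 0 = (rowA a (rowP a n i)).1.eval t ∧
    Pexc a n t i 1 = (rowA a (rowP a n i)).2.eval t := by
  have h2 : (2 - a ^ 2) ≠ 0 := by nlinarith
  have hM : (matDeriv (Pher a (1 - a ^ 2) 1) t)⁻¹ * Pher a (1 - a ^ 2) 1 t
      = !![t, -(a / 2); -(a / (2 - a ^ 2)), t] := by
    have e : matDeriv (Pher a (1 - a ^ 2) 1) t = !![2, 0; 0, 2 - a ^ 2] := by
      rw [matDeriv_Pher]
      ext i j
      fin_cases i <;> fin_cases j <;> simp [rowP, hermP, -map_pow]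
      ring
    have e' : (!![2, 0; 0, 2 - a ^ 2] : M2)⁻¹ = !![1 / 2, 0; 0, 1 / (2 - a ^ 2)] := by
      refine Matrix.inv_eq_left_inv ?_
      ext i j
      fin_cases i <;> fin_cases j <;> simp [Matrix.mul_apply, Fin.sum_univ_two, h2]
    rw [e, e', Pher_eq]
    ext i j
    fin_cases i <;> fin_cases j <;> simp [Matrix.mul_apply, Fin.sum_univ_two, rowP, hermP]
    · ring
    · field_simp
    · field_simp; ring
  unfold Pexc Acal
  rw [hM, matDeriv_Pher, Pher_eq]
  fin_cases i <;> simp [rowA] <;> constructor <;> ring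
end

/-! ### Moment determinacy under exponential decay -/

lemma integrable_pow_mul_exp {g : ℝ → ℝ} (hm : Measurable g)
    (he : ∀ c : ℝ, Integrable (fun x => g x * Real.exp (c * |x|))) (n : ℕ) (c : ℝ) :
    Integrable (fun x => g x * x ^ n * Real.exp (c * |x|)) := by
  refine ((he (c + 1)).norm.const_mul (n.factorial : ℝ)).mono'
    (by fun_prop) (Filter.Eventually.of_forall fun x => ?_)
  have h1 : |x| ^ n ≤ n.factorial * Real.exp |x| := by
    have := Real.pow_div_factorial_le_exp |x| (abs_nonneg x) n
    rwa [div_le_iff₀ (by positivity), mul_comm] at this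
  have h2 : Real.exp ((c + 1) * |x|) = Real.exp |x| * Real.exp (c * |x|) := by
    rw [← Real.exp_add]; ring_nf
  simp only [norm_mul, norm_pow, Real.norm_eq_abs, Real.abs_exp]
  rw [h2]
  calc |g x| * |x| ^ n * Real.exp (c * |x|)
      ≤ |g x| * (n.factorial * Real.exp |x|) * Real.exp (c * |x|) := by gcongr
    _ = _ := by ring

/-- Term-by-term integration of the exponential series, dominated by `|g x| e^{|t x|}`. -/
lemma integral_mul_cexp_eq_zero {g : ℝ → ℝ} (hm : Measurable g)
    (he : ∀ c : ℝ, Integrable (fun x => g x * Real.exp (c * |x|)))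
    (h0 : ∀ n : ℕ, ∫ x, g x * x ^ n = 0) (t : ℝ) :
    ∫ x, (g x : ℂ) * Complex.exp (t * x * Complex.I) = 0 := by
  have hs := hasSum_integral_of_dominated_convergence (μ := volume)
    (F := fun (n : ℕ) (x : ℝ) => (g x : ℂ) * ((t * x * Complex.I) ^ n / n.factorial))
    (f := fun x => (g x : ℂ) * Complex.exp (t * x * Complex.I))
    (fun n x => |g x| * ((|t| * |x|) ^ n / n.factorial))
    (fun n => (by fun_prop : Measurable _).aestronglyMeasurable)
    (fun n => Filter.Eventually.of_forall fun x => by simp)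
    (Filter.Eventually.of_forall fun x =>
      (Real.summable_pow_div_factorial (|t| * |x|)).mul_left _)
    (by
      refine (he |t|).norm.congr (Filter.Eventually.of_forall fun x => ?_)
      simp only [norm_mul, Real.norm_eq_abs, Real.abs_exp]
      rw [tsum_mul_left, Real.exp_eq_exp_ℝ, NormedSpace.exp_eq_tsum_div])
    (Filter.Eventually.of_forall fun x => by
      refine HasSum.mul_left _ ?_
      rw [Complex.exp_eq_exp_ℂ]
      exact NormedSpace.expSeries_div_hasSum_exp _)
  refine hs.unique ?_
  convert hasSum_zero using 2 with n
  have : ∀ x : ℝ, (g x : ℂ) * ((t * x * Complex.I) ^ n / n.factorial)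
      = ((t * Complex.I) ^ n / n.factorial) * ((g x * x ^ n : ℝ) : ℂ) := by
    intro x; push_cast; ring
  simp_rw [this]
  rw [integral_const_mul, integral_complex_ofReal, h0]
  simp

/-- The positive and negative parts of `g` are densities of finite measures with the same
characteristic function. -/
theorem ae_eq_zero_of_moments {g : ℝ → ℝ} (hm : Measurable g)
    (he : ∀ c : ℝ, Integrable (fun x => g x * Real.exp (c * |x|)))
    (h0 : ∀ n : ℕ, ∫ x, g x * x ^ n = 0) : ∀ᵐ x, g x = 0 := by
  have hg : Integrable g := by simpa using he 0
  have key : ∀ {h : ℝ → ℝ}, Measurable h → Integrable h → ∀ t : ℝ,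
      charFun (volume.withDensity fun x => ENNReal.ofReal (h x)) t
        = ∫ x, ((max (h x) 0 : ℝ) : ℂ) * Complex.exp (t * x * Complex.I) := by
    intro h hh _ t
    rw [charFun_apply_real, integral_withDensity_eq_integral_toReal_smul (by fun_prop) (by simp)]
    simp [ENNReal.toReal_ofReal', Complex.real_smul]
  have fin : ∀ {h : ℝ → ℝ}, Integrable h →
      IsFiniteMeasure (volume.withDensity fun x => ENNReal.ofReal (h x)) :=
    fun h => isFiniteMeasure_withDensity_ofReal h.2
  have int : ∀ {h : ℝ → ℝ}, Integrable h → ∀ t : ℝ, Integrable fun x =>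
      ((max (h x) 0 : ℝ) : ℂ) * Complex.exp (t * x * Complex.I) := by
    intro h hh t
    refine hh.pos_part.ofReal.mul_bdd (c := 1) (by fun_prop) (Filter.Eventually.of_forall fun x => ?_)
    rw [← Complex.ofReal_mul, Complex.norm_exp_ofReal_mul_I]
  have := fin hg
  have := fin hg.neg
  have heq : (volume.withDensity fun x => ENNReal.ofReal (g x))
      = volume.withDensity fun x => ENNReal.ofReal ((-g) x) := by
    refine Measure.ext_of_charFun (funext fun t => ?_)
    rw [key hm hg, key hm.neg hg.neg, ← sub_eq_zero, ← integral_sub (int hg t) (int hg.neg t),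
      ← integral_mul_cexp_eq_zero hm he h0 t]
    congr 1; ext x
    rw [← sub_mul, ← Complex.ofReal_sub]
    congr 2
    rcases le_total (g x) 0 with h | h <;> simp [h]
  rw [withDensity_eq_iff_of_sigmaFinite (by fun_prop) (by fun_prop)] at heq
  filter_upwards [heq] with x hx
  have := congrArg ENNReal.toReal hx
  simp only [ENNReal.toReal_ofReal', Pi.neg_apply] at this
  rcases le_total (g x) 0 with h | h <;> simp [h] at this <;> linarith

/-! ### Positivity and decay of the weight -/

lemma pfrak_le {a : ℝ} (ha : a ^ 2 > 2) (t : ℝ) : pfrak a t ≤ -a ^ 2 := by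
  unfold pfrak; nlinarith [mul_nonneg (by linarith : (0 : ℝ) ≤ a ^ 2 - 2) (sq_nonneg t)]

lemma Wexc_symm (a t : ℝ) : Wexc a t 1 0 = Wexc a t 0 1 := by simp [Wexc]

lemma Wexc_det {a : ℝ} (ha : a ^ 2 > 2) (t : ℝ) :
    0 < Wexc a t 0 0 * Wexc a t 1 1 - Wexc a t 0 1 ^ 2 := by
  have hp := pfrak_le ha t
  have hp0 : pfrak a t ≠ 0 := by intro h; rw [h] at hp; linarith
  have hb : a ^ 2 - 2 ≠ 0 := by intro h; linarith
  have : Wexc a t 0 0 * Wexc a t 1 1 - Wexc a t 0 1 ^ 2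
      = (Real.exp (-t ^ 2)) ^ 2 / (pfrak a t) ^ 2 * ((a ^ 2 - 1) / (2 * (a ^ 2 - 2))) := by
    simp only [Wexc, Matrix.smul_apply, Matrix.of_apply, Matrix.cons_val', Matrix.cons_val_zero,
      Matrix.cons_val_one, smul_eq_mul, Matrix.cons_val_fin_one]
    field_simp
    unfold pfrak
    ring
  rw [this]
  have h1 : 0 < a ^ 2 - 1 := by linarith
  have h2 : 0 < a ^ 2 - 2 := by linarith
  positivity

lemma Wexc_one_one_pos {a : ℝ} (ha : a ^ 2 > 2) (t : ℝ) : 0 < Wexc a t 1 1 := by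
  have hp := pfrak_le ha t
  have hp0 : pfrak a t ≠ 0 := by intro h; rw [h] at hp; linarith
  have h2 : 0 < a ^ 2 - 2 := by linarith
  have h3 : 0 < a ^ 2 * (a ^ 2 - 2) - pfrak a t := by nlinarith
  simp only [Wexc, Matrix.smul_apply, Matrix.of_apply, Matrix.cons_val', smul_eq_mul,
    Matrix.cons_val_one, Matrix.cons_val_fin_one]
  positivity

lemma Wexc_zero_zero_nonneg {a : ℝ} (ha : a ^ 2 > 2) (t : ℝ) : 0 ≤ Wexc a t 0 0 := by
  have h1 := Wexc_det ha t
  have h2 := Wexc_one_one_pos ha t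
  by_contra! h
  nlinarith [mul_pos_of_neg_of_neg h (neg_neg_of_pos h2), sq_nonneg (Wexc a t 0 1)]

lemma Wexc_diag_le {a : ℝ} (ha : a ^ 2 > 2) : ∃ C : ℝ, ∀ t k,
    Wexc a t k k ≤ C * Real.exp (-t ^ 2) := by
  have h2 : 0 < a ^ 2 - 2 := by linarith
  refine ⟨a ^ 2 / (4 * (a ^ 2 - 2)) + 2 * (a ^ 2 * (a ^ 2 - 2) + 1) / (a ^ 2 - 2) ^ 2, fun t k => ?_⟩
  have hp := pfrak_le ha t
  set p := pfrak a t with hpd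
  have hp1 : p < -1 := by linarith
  have hp0 : p ≠ 0 := by linarith
  have hpp : 0 < p ^ 2 := by positivity
  have key : ∀ x C : ℝ, x ≤ C * p ^ 2 → Real.exp (-t ^ 2) / p ^ 2 * x ≤ C * Real.exp (-t ^ 2) := by
    intro x C h
    rw [div_mul_eq_mul_div, div_le_iff₀ hpp]
    nlinarith [Real.exp_pos (-t ^ 2)]
  have hA : 0 ≤ a ^ 2 / (4 * (a ^ 2 - 2)) := by positivity
  have hB : 0 ≤ 2 * (a ^ 2 * (a ^ 2 - 2) + 1) / (a ^ 2 - 2) ^ 2 := by positivity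
  fin_cases k
  · simp only [Wexc, Matrix.smul_apply, Matrix.of_apply, Matrix.cons_val', smul_eq_mul,
      Matrix.cons_val_zero, Matrix.cons_val_fin_one, Fin.zero_eta]
    refine key _ _ ?_
    have : p / (a ^ 2 - 2) ≤ 0 := div_nonpos_of_nonpos_of_nonneg (by linarith) h2.le
    nlinarith [mul_nonneg hB hpp.le]
  · simp only [Wexc, Matrix.smul_apply, Matrix.of_apply, Matrix.cons_val', smul_eq_mul,
      Matrix.cons_val_one, Matrix.cons_val_fin_one, Fin.mk_one]
    refine key _ _ ?_
    have h3 : 2 * (a ^ 2 * (a ^ 2 - 2) - p) / (a ^ 2 - 2) ^ 2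
        ≤ 2 * (a ^ 2 * (a ^ 2 - 2) + 1) / (a ^ 2 - 2) ^ 2 * p ^ 2 := by
      rw [div_mul_eq_mul_div]
      refine div_le_div_of_nonneg_right ?_ (sq_nonneg _)
      have h4 : 0 < a ^ 2 * (a ^ 2 - 2) := by positivity
      nlinarith [mul_nonneg h4.le (by nlinarith : 0 ≤ p ^ 2 - 1)]
    nlinarith [mul_nonneg hA hpp.le]

lemma measurable_Wexc (a : ℝ) (i j : Fin 2) : Measurable fun t => Wexc a t i j := by
  fin_cases i <;> fin_cases j <;> simp [Wexc, pfrak] <;> fun_prop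

lemma integrable_exp_mul_gauss (c : ℝ) :
    Integrable fun t : ℝ => Real.exp (-t ^ 2) * Real.exp (c * |t|) := by
  refine ((integrable_exp_neg_mul_sq (b := 1 / 2) (by norm_num)).const_mul
    (Real.exp (c ^ 2 / 2))).mono' (by fun_prop) (Filter.Eventually.of_forall fun t => ?_)
  rw [Real.norm_of_nonneg (by positivity), ← Real.exp_add, ← Real.exp_add]
  refine Real.exp_le_exp.2 ?_
  nlinarith [sq_nonneg (|t| - c), sq_abs t]

/-- Cauchy–Schwarz for the quadratic form `!![A, B; B, D]`, applied to `(x, y)` and to each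
basis vector. -/
lemma cauchy_schwarz {A B D : ℝ} (hD : 0 < D) (hdet : 0 < A * D - B ^ 2) (x y : ℝ) :
    0 ≤ A * x ^ 2 + 2 * B * x * y + D * y ^ 2 ∧
    (x * A + y * B) ^ 2 ≤ A * (A * x ^ 2 + 2 * B * x * y + D * y ^ 2) ∧
    (x * B + y * D) ^ 2 ≤ D * (A * x ^ 2 + 2 * B * x * y + D * y ^ 2) := by
  have h2 : (x * B + y * D) ^ 2 ≤ D * (A * x ^ 2 + 2 * B * x * y + D * y ^ 2) := by
    nlinarith [mul_nonneg hdet.le (sq_nonneg x)]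
  refine ⟨?_, ?_, h2⟩
  · exact nonneg_of_mul_nonneg_right ((sq_nonneg _).trans h2) hD
  · nlinarith [mul_nonneg hdet.le (sq_nonneg y)]

/-! ### Orthogonality and completeness -/

section
open Polynomial

lemma integrable_mul_poly {g : ℝ → ℝ} (hm : Measurable g)
    (he : ∀ c : ℝ, Integrable (fun x => g x * Real.exp (c * |x|))) (p : ℝ[X]) (c : ℝ) :
    Integrable fun x => g x * p.eval x * Real.exp (c * |x|) := by
  induction p using Polynomial.induction_on' with
  | add p q hp hq =>
    refine (hp.add hq).congr (Filter.Eventually.of_forall fun x => ?_)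
    simp; ring
  | monomial n r =>
    refine ((integrable_pow_mul_exp hm he n c).const_mul r).congr
      (Filter.Eventually.of_forall fun x => ?_)
    simp; ring

lemma integrable_mul_poly' {g : ℝ → ℝ} (hm : Measurable g)
    (he : ∀ c : ℝ, Integrable (fun x => g x * Real.exp (c * |x|))) (p : ℝ[X]) :
    Integrable fun x => g x * p.eval x := by
  simpa using integrable_mul_poly hm he p 0

/-- The functional `p ↦ ∫ g p` on polynomials, for `g` of exponential decay. -/
def pairing (g : ℝ → ℝ) (hm : Measurable g)
    (he : ∀ c : ℝ, Integrable (fun x => g x * Real.exp (c * |x|))) : ℝ[X] →ₗ[ℝ] ℝ where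
  toFun p := ∫ x, g x * p.eval x
  map_add' p q := by
    rw [← integral_add (integrable_mul_poly' hm he p) (integrable_mul_poly' hm he q)]
    simp [mul_add]
  map_smul' c p := by
    rw [RingHom.id_apply, smul_eq_mul, ← integral_const_mul]
    congr 1; ext x; simp; ring

/-- Pointwise vanishing for a row `(g, h)` of `f 𝒲_a`, given its orthogonality to the exceptional
polynomials and its exponential decay. -/
theorem row_zero {a : ℝ} (ha : a ^ 2 > 2) {g h : ℝ → ℝ} (hg : Measurable g) (hh : Measurable h)
    (eg : ∀ c : ℝ, Integrable (fun x => g x * Real.exp (c * |x|)))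
    (eh : ∀ c : ℝ, Integrable (fun x => h x * Real.exp (c * |x|)))
    (horth : ∀ n : ℕ, n ≠ 1 → ∀ i : Fin 2,
      ∫ t, (g t * Pexc a n t i 0 + h t * Pexc a n t i 1) = 0) :
    ∀ᵐ t, g t = 0 ∧ h t = 0 := by
  have hb : 2 - a ^ 2 ≠ 0 := by intro h; linarith
  set Λ : (ℝ[X] × ℝ[X]) →ₗ[ℝ] ℝ :=
    ((pairing g hg eg).coprod (pairing h hh eh)).comp (rowA a) with hΛ
  have hΛv : ∀ y, Λ y = ∫ t, (g t * (rowA a y).1.eval t + h t * (rowA a y).2.eval t) := by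
    intro y
    rw [integral_add (integrable_mul_poly' hg eg _) (integrable_mul_poly' hh eh _)]
    rfl
  have htop : LinearMap.ker Λ = ⊤ := by
    refine rowP_span ha _ fun n i => ?_
    rw [LinearMap.mem_ker]
    by_cases hn : n = 1
    -- `𝒜 P₁ = 0`, so nothing is needed from the excluded index
    · have : rowA a (rowP a 1 i) = 0 := by
        rw [Prod.ext_iff]
        constructor <;> refine Polynomial.funext fun t => ?_ <;> fin_cases i <;>
          simp [rowA, rowP, hermP, -map_pow] <;> field_simp <;> ring
      rw [hn, hΛ, LinearMap.comp_apply, this, map_zero]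
    · rw [hΛv, ← horth n hn i]
      simp_rw [(Pexc_eq ha n _ i).1, (Pexc_eq ha n _ i).2]
  have hall : ∀ y, Λ y = 0 := fun y => by
    rw [← LinearMap.mem_ker, htop]; trivial
  -- the entries of the symmetric matrix `P₁ (P₁')⁻¹ P₁`
  set r11 : ℝ[X] := C 2 * X ^ 2 + C (a ^ 2 / (2 - a ^ 2)) with h11
  set r12 : ℝ[X] := C (-(2 * a)) * X with h12
  set r22 : ℝ[X] := C (2 - a ^ 2) * X ^ 2 + C (a ^ 2 / 2) with h22
  have mom : ∀ u1 u2 : ℝ[X], (∀ n : ℕ, ∃ y, rowA a y =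
      (C ((n : ℝ) + 1) * X ^ n * u1, C ((n : ℝ) + 1) * X ^ n * u2)) →
      ∀ᵐ t, g t * u1.eval t + h t * u2.eval t = 0 := by
    intro u1 u2 hu
    have i1 := integrable_mul_poly hg eg u1
    have i2 := integrable_mul_poly hh eh u2
    refine ae_eq_zero_of_moments (by fun_prop) (fun c => ?_) (fun n => ?_)
    · refine ((i1 c).add (i2 c)).congr (Filter.Eventually.of_forall fun x => ?_)
      simp only [Pi.add_apply]
      ring
    · obtain ⟨y, hy⟩ := hu n
      have h0 := hall y
      rw [hΛv, hy] at h0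
      have e : ∀ t, g t * (C ((n : ℝ) + 1) * X ^ n * u1).eval t
          + h t * (C ((n : ℝ) + 1) * X ^ n * u2).eval t
          = ((n : ℝ) + 1) * ((g t * u1.eval t + h t * u2.eval t) * t ^ n) := by
        intro t; simp; ring
      simp_rw [e] at h0
      rw [integral_const_mul] at h0
      exact (mul_eq_zero.1 h0).resolve_left (by positivity)
  -- `y = t^{n+1} e_k P₁` gives `𝒜 y = (n + 1) tⁿ e_k P₁ (P₁')⁻¹ P₁`
  have m1 := mom r11 r12 fun n => ⟨(X ^ (n + 1) * (C 2 * X), X ^ (n + 1) * C (-a)), by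
    rw [Prod.ext_iff]
    constructor <;> refine Polynomial.funext fun t => ?_ <;>
      simp [rowA, h11, h12, -map_pow] <;> field_simp <;> ring⟩
  have m2 := mom r12 r22 fun n => ⟨(X ^ (n + 1) * C (-a), X ^ (n + 1) * (C (2 - a ^ 2) * X)), by
    rw [Prod.ext_iff]
    constructor <;> refine Polynomial.funext fun t => ?_ <;>
      simp [rowA, h22, h12, -map_pow, -map_sub] <;> field_simp <;> ring⟩
  filter_upwards [m1, m2] with t e1 e2
  have hdet : r11.eval t * r22.eval t - r12.eval t ^ 2 ≠ 0 := by
    have hp := pfrak_le ha t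
    have hp0 : pfrak a t ≠ 0 := by intro h; rw [h] at hp; linarith
    have : r11.eval t * r22.eval t - r12.eval t ^ 2 = pfrak a t ^ 2 / (2 * (2 - a ^ 2)) := by
      simp only [h11, h12, h22, pfrak, eval_add, eval_mul, eval_C, eval_X, eval_pow]
      field_simp
      ring
    rw [this]
    positivity
  constructor
  · refine (mul_eq_zero.1 (?_ : (r11.eval t * r22.eval t - r12.eval t ^ 2) * g t = 0)).resolve_left hdet
    linear_combination r22.eval t * e1 - r12.eval t * e2
  · refine (mul_eq_zero.1 (?_ : (r11.eval t * r22.eval t - r12.eval t ^ 2) * h t = 0)).resolve_left hdet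
    linear_combination r11.eval t * e2 - r12.eval t * e1
end

lemma mul_transpose_apply (A B : M2) (i j : Fin 2) :
    (A * Bᵀ) i j = A i 0 * B j 0 + A i 1 * B j 1 := by
  rw [Matrix.mul_apply, Fin.sum_univ_two, Matrix.transpose_apply, Matrix.transpose_apply]

/-- **completeness.** For `a² > 2`, if a measurable matrix function `f`
belongs to `L²(𝒲_a)` and is orthogonal to every exceptional polynomial `𝒫ₙ`, `n ≠ 1`,
then `f = 0` Lebesgue-almost everywhere; i.e. the left linear combinations of the `𝒫ₙ`
are dense in `L²(𝒲_a)`. -/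
theorem exceptional_hermite_completeness (a : ℝ) (ha : a ^ 2 > 2)
    (f : ℝ → M2)
    (hmeas : ∀ i j : Fin 2, Measurable fun t => f t i j)
    (hL2 : Integrable (fun t : ℝ => (f t * Wexc a t * (f t)ᵀ).trace))
    (horth : ∀ n : ℕ, n ≠ 1 → ∀ i j : Fin 2,
      (∫ t : ℝ, (f t * Wexc a t * (Pexc a n t)ᵀ) i j) = 0) :
    ∀ᵐ t : ℝ, f t = 0 := by
  have hfW : ∀ t i k, (f t * Wexc a t) i k = f t i 0 * Wexc a t 0 k + f t i 1 * Wexc a t 1 k := by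
    intro t i k; simp [Matrix.mul_apply, Fin.sum_univ_two]
  have hmW : ∀ i k, Measurable fun t => (f t * Wexc a t) i k := by
    intro i k
    simp_rw [hfW]
    exact ((hmeas i 0).mul (measurable_Wexc a 0 k)).add ((hmeas i 1).mul (measurable_Wexc a 1 k))
  obtain ⟨C, hC⟩ := Wexc_diag_le ha
  -- Cauchy–Schwarz for the form `𝒲_a`, summed over the rows of `f`
  have hbound : ∀ t i k, (f t * Wexc a t) i k ^ 2
      ≤ Wexc a t k k * (f t * Wexc a t * (f t)ᵀ).trace := by
    intro t i k
    have cs := fun j => cauchy_schwarz (Wexc_one_one_pos ha t)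
      (Wexc_det ha t) (f t j 0) (f t j 1)
    set Q : Fin 2 → ℝ := fun j => Wexc a t 0 0 * f t j 0 ^ 2
      + 2 * Wexc a t 0 1 * f t j 0 * f t j 1 + Wexc a t 1 1 * f t j 1 ^ 2 with hQ
    have htr : (f t * Wexc a t * (f t)ᵀ).trace = Q 0 + Q 1 := by
      simp only [Matrix.trace, Matrix.diag, Fin.sum_univ_two, Matrix.mul_apply,
        Matrix.transpose_apply, Wexc_symm, hQ]
      ring
    have hQi : Q i ≤ Q 0 + Q 1 := by
      have h0 := (cs 0).1
      have h1 := (cs 1).1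
      fin_cases i
      · exact le_add_of_nonneg_right h1
      · exact le_add_of_nonneg_left h0
    have hk : (f t * Wexc a t) i k ^ 2 ≤ Wexc a t k k * Q i := by
      rw [hfW]
      fin_cases k
      · simpa [Wexc_symm] using (cs i).2.1
      · simpa using (cs i).2.2
    have hkk : 0 ≤ Wexc a t k k := by
      fin_cases k
      · exact Wexc_zero_zero_nonneg ha t
      · exact (Wexc_one_one_pos ha t).le
    rw [htr]
    exact hk.trans (mul_le_mul_of_nonneg_left hQi hkk)
  have hexp : ∀ i k, ∀ c : ℝ, Integrable fun t => (f t * Wexc a t) i k * Real.exp (c * |t|) := by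
    intro i k c
    have hm := hmW i k
    refine (hL2.norm.add ((integrable_exp_mul_gauss (2 * c)).const_mul |C|)).mono'
      (hm.mul (by fun_prop)).aestronglyMeasurable (Filter.Eventually.of_forall fun t => ?_)
    have hb := hbound t i k
    set w := (f t * Wexc a t) i k
    set T := (f t * Wexc a t * (f t)ᵀ).trace with hT
    set E := Real.exp (c * |t|) with hE
    have hE2 : Real.exp (2 * c * |t|) = E ^ 2 := by rw [hE, ← Real.exp_nat_mul]; ring_nf
    have hkk : 0 ≤ Wexc a t k k := by
      fin_cases k
      · exact Wexc_zero_zero_nonneg ha t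
      · exact (Wexc_one_one_pos ha t).le
    have hCk : Wexc a t k k ≤ |C| * Real.exp (-t ^ 2) := (hC t k).trans (by gcongr; exact le_abs_self C)
    have h1 : w ^ 2 ≤ |C| * Real.exp (-t ^ 2) * |T| :=
      hb.trans ((mul_le_mul_of_nonneg_left (le_abs_self T) hkk).trans (by gcongr))
    simp only [Pi.add_apply, Real.norm_eq_abs, hE2]
    refine abs_le_of_sq_le_sq ?_ (by positivity)
    have h2 : (w * E) ^ 2 ≤ (|C| * Real.exp (-t ^ 2) * E ^ 2) * |T| := by
      rw [mul_pow]; nlinarith [sq_nonneg E]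
    have h3 : 0 ≤ |C| * Real.exp (-t ^ 2) * E ^ 2 := by positivity
    nlinarith [abs_nonneg T]
  have hz : ∀ i, ∀ᵐ t, (f t * Wexc a t) i 0 = 0 ∧ (f t * Wexc a t) i 1 = 0 := by
    intro i
    refine row_zero ha (hmW i 0) (hmW i 1) (hexp i 0) (hexp i 1) fun n hn j => ?_
    refine (integral_congr_ae (Filter.Eventually.of_forall fun t => ?_)).trans (horth n hn i j)
    exact (mul_transpose_apply (f t * Wexc a t) (Pexc a n t) i j).symm
  filter_upwards [hz 0, hz 1] with t h0 h1
  have hfz : f t * Wexc a t = 0 := by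
    ext i k
    fin_cases i <;> fin_cases k
    exacts [h0.1, h0.2, h1.1, h1.2]
  have hdet : IsUnit (Wexc a t).det := by
    rw [Matrix.det_fin_two, Wexc_symm, ← sq]
    exact (Wexc_det ha t).ne'.isUnit
  rw [← Matrix.mul_nonsing_inv_cancel_right (Wexc a t) (f t) hdet, hfz, Matrix.zero_mul]
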